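/- arXiv:0903.1442 — 2 statements merged into one kernel-verified Lean document; each statement's English description precedes it below -/
import Mathlib

section
/- Let K be an algebraically closed field of characteristic 0, let α ≥ 1, let m_1, …, m_α be natural numbers, not all zero, with greatest common divisor m, and let b ∈ K with b ≠ 0. Suppose p ∈ K[y_1, …, y_α] is irreducible and every point a ∈ K^α with p(a) = 0 satisfies a_1^{m_1} ⋯ a_α^{m_α} = b. Then there exist k ∈ K with k ≠ 0 and c ∈ K with c^m = b such that p = k · (y_1^{m_1/m} ⋯ y_α^{m_α/m} − c). -/
open MvPolynomial

/-!
By the Nullstellensatz `p` divides `Y ^ m - b`, where `Y` is the monomial with the coprime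
exponents `n i = mexp i / m`. Over an algebraically closed field `Y ^ m - b` is a product of factors
`Y - c` with `c ^ m = b`, so the prime `p` divides one of them, and it remains to see that `Y - c`
is irreducible. For every integral weight orthogonal to `n`, the binomial `Y - c` is weighted
homogeneous of degree `0`, hence so are its factors, because their constant terms are nonzero. So
the exponents of a factor are parallel to `n`, hence multiples of `n` because `n` is primitive. A
nonconstant factor therefore has at least the degree of `Y - c`.
-/

section WeightedHomogeneous

variable {σ R M : Type*} [CommSemiring R] [AddCommMonoid M] {w : σ → M} {p q F : MvPolynomial σ R}

theorem weightedHomogeneousComponent_add_mul_of_uniqueAdd [DecidableEq M] {a b : M}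
    (hab : UniqueAdd (p.support.image (Finsupp.weight w)) (q.support.image (Finsupp.weight w))
      a b) :
    weightedHomogeneousComponent w (a + b) (p * q) =
      weightedHomogeneousComponent w a p * weightedHomogeneousComponent w b q := by
  classical
  ext e
  rw [coeff_weightedHomogeneousComponent]
  split_ifs with he
  · rw [coeff_mul, coeff_mul]
    refine Finset.sum_congr rfl fun ⟨d, d'⟩ hdd' ↦ ?_
    have hweight : Finsupp.weight w d + Finsupp.weight w d' = a + b := by
      rw [← map_add, Finset.HasAntidiagonal.mem_antidiagonal.1 hdd', he]
    simp only [coeff_weightedHomogeneousComponent]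
    by_cases hd : coeff d p = 0
    · simp [hd]
    by_cases hd' : coeff d' q = 0
    · simp [hd']
    obtain ⟨rfl, rfl⟩ := hab (Finset.mem_image_of_mem _ (mem_support_iff.2 hd))
      (Finset.mem_image_of_mem _ (mem_support_iff.2 hd')) hweight
    simp
  · exact (((weightedHomogeneousComponent_isWeightedHomogeneous a p).mul
      (weightedHomogeneousComponent_isWeightedHomogeneous b q)).coeff_eq_zero e he).symm

theorem weightedHomogeneousComponent_ne_zero_of_mem_image_weight [DecidableEq M] {a : M}
    (ha : a ∈ p.support.image (Finsupp.weight w)) : weightedHomogeneousComponent w a p ≠ 0 := by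
  obtain ⟨d, hd, rfl⟩ := Finset.mem_image.1 ha
  refine ne_zero_iff.2 ⟨d, ?_⟩
  rw [coeff_weightedHomogeneousComponent, if_pos rfl]
  exact mem_support_iff.1 hd

theorem exists_isWeightedHomogeneous_of_dvd [NoZeroDivisors R] [TwoUniqueSums M] {m : M}
    (hF : IsWeightedHomogeneous w F m) (hF0 : F ≠ 0) (hpF : p ∣ F) :
    ∃ a, IsWeightedHomogeneous w p a := by
  classical
  obtain ⟨q, rfl⟩ := hpF
  let A := p.support.image (Finsupp.weight w)
  let B := q.support.image (Finsupp.weight w)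
  have hB : B.Nonempty := (support_nonempty.2 (right_ne_zero_of_mul hF0)).image _
  have sum_eq_of_uniqueAdd : ∀ x ∈ A ×ˢ B, UniqueAdd A B x.1 x.2 → x.1 + x.2 = m := by
    intro x hx hunique
    obtain ⟨hxA, hxB⟩ := Finset.mem_product.1 hx
    by_contra hne
    refine mul_ne_zero (weightedHomogeneousComponent_ne_zero_of_mem_image_weight hxA)
      (weightedHomogeneousComponent_ne_zero_of_mem_image_weight hxB) ?_
    rw [← weightedHomogeneousComponent_add_mul_of_uniqueAdd hunique,
      hF.weightedHomogeneousComponent_ne _ hne]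
  have hcard : A.card * B.card ≤ 1 := by
    by_contra! hlt
    obtain ⟨x, hx, y, hy, hxy, hx_unique, hy_unique⟩ :=
      TwoUniqueSums.uniqueAdd_of_one_lt_card hlt
    obtain ⟨hxA, hxB⟩ := Finset.mem_product.1 hx
    have hsum : x.1 + x.2 = y.1 + y.2 :=
      (sum_eq_of_uniqueAdd x hx hx_unique).trans (sum_eq_of_uniqueAdd y hy hy_unique).symm
    exact hxy (Prod.ext_iff.2 (hy_unique hxA hxB hsum))
  obtain ⟨d, hd⟩ := support_nonempty.2 (left_ne_zero_of_mul hF0)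
  refine ⟨Finsupp.weight w d, fun e he ↦ ?_⟩
  have hA : A.card ≤ 1 := (Nat.le_mul_of_pos_right _ hB.card_pos).trans hcard
  exact Finset.card_le_one.1 hA _ (Finset.mem_image_of_mem _ (mem_support_iff.2 he)) _
    (Finset.mem_image_of_mem _ hd)

end WeightedHomogeneous

section PrimitiveBinomial

variable {σ R : Type*} [CommRing R] {n d : σ →₀ ℕ} {c : R} {p : MvPolynomial σ R}

theorem exists_eq_nsmul_of_mul_eq_mul (hn : n.support.gcd n = 1)
    (hnd : ∀ i j, n i * d j = n j * d i) : ∃ k : ℕ, d = k • n := by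
  refine ⟨n.support.gcd d, Finsupp.ext fun j ↦ ?_⟩
  calc d j = n.support.gcd fun i ↦ n i * d j := by simp [Finset.gcd_mul_right, hn]
    _ = n.support.gcd fun i ↦ n j * d i := Finset.gcd_congr rfl fun i _ ↦ hnd i j
    _ = (n.support.gcd d • n) j := by simp [Finset.gcd_mul_left, mul_comm]

theorem coeff_zero_ne_zero_of_dvd_monomial_sub_C (hn : n ≠ 0) (hc : c ≠ 0)
    (hp : p ∣ monomial n 1 - C c) : coeff 0 p ≠ 0 := by
  classical
  intro h
  have hdvd := map_dvd constantCoeff hp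
  simp [constantCoeff_eq, coeff_monomial, h, hn, hc] at hdvd

theorem totalDegree_monomial_sub_C [Nontrivial R] (hn : n ≠ 0) :
    (monomial n 1 - C c).totalDegree = n.degree := by
  classical
  refine le_antisymm ?_ (le_totalDegree ?_)
  · exact (totalDegree_sub_C_le _ _).trans_eq (totalDegree_monomial n one_ne_zero)
  · simp [coeff_C, hn.symm]

theorem isUnit_of_totalDegree_eq_zero_of_dvd_monomial_sub_C (hn : n ≠ 0)
    (hp : p ∣ monomial n 1 - C c) (hp0 : p.totalDegree = 0) : IsUnit p := by
  classical
  rw [totalDegree_eq_zero_iff_eq_C.1 hp0, C_dvd_iff_dvd_coeff] at hp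
  have hunit : coeff 0 p ∣ 1 := by simpa [coeff_C, hn.symm] using hp n
  rw [totalDegree_eq_zero_iff_eq_C.1 hp0]
  exact (isUnit_of_dvd_one hunit).map C

variable [IsDomain R]

theorem isWeightedHomogeneous_zero_of_dvd_monomial_sub_C {M : Type*} [AddCommMonoid M]
    [TwoUniqueSums M] {w : σ → M} (hn : n ≠ 0) (hc : c ≠ 0) (hw : Finsupp.weight w n = 0)
    (hp : p ∣ monomial n 1 - C c) : IsWeightedHomogeneous w p 0 := by
  have hbinomial : IsWeightedHomogeneous w (monomial n 1 - C c) 0 :=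
    (isWeightedHomogeneous_monomial w n 1 hw).sub (isWeightedHomogeneous_C w c)
  have hbinomial_ne : monomial n 1 - C c ≠ 0 := by
    intro h
    exact coeff_zero_ne_zero_of_dvd_monomial_sub_C hn hc dvd_rfl (by rw [h, coeff_zero])
  obtain ⟨a, ha⟩ := exists_isWeightedHomogeneous_of_dvd hbinomial hbinomial_ne hp
  have ha0 : 0 = a := by
    simpa using ha (coeff_zero_ne_zero_of_dvd_monomial_sub_C hn hc hp)
  rwa [ha0]

theorem exists_eq_nsmul_of_mem_support_of_dvd_monomial_sub_C (hn : n.support.gcd n = 1)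
    (hc : c ≠ 0) (hp : p ∣ monomial n 1 - C c) (hd : d ∈ p.support) : ∃ k : ℕ, d = k • n := by
  classical
  have hn0 : n ≠ 0 := by rintro rfl; simp at hn
  refine exists_eq_nsmul_of_mul_eq_mul hn fun i j ↦ ?_
  let w : σ → ℤ := Pi.single j (n i : ℤ) - Pi.single i (n j : ℤ)
  have weight_eq (e : σ →₀ ℕ) : Finsupp.weight w e = n i * e j - n j * e i := by
    calc Finsupp.weight w e
        = Finsupp.weight (Pi.single j (n i : ℤ)) e - Finsupp.weight (Pi.single i (n j : ℤ)) e := by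
          simp only [w, Finsupp.weight_apply, Pi.sub_apply, smul_sub, Finsupp.sum_sub]
      _ = n i * e j - n j * e i := by
          simp only [Finsupp.weight_single_index, nsmul_eq_mul, mul_comm]
  have hw : Finsupp.weight w n = 0 := by rw [weight_eq]; ring
  have hwd := isWeightedHomogeneous_zero_of_dvd_monomial_sub_C hn0 hc hw hp (mem_support_iff.1 hd)
  rw [weight_eq, sub_eq_zero] at hwd
  exact_mod_cast hwd

theorem degree_le_totalDegree_of_dvd_monomial_sub_C (hn : n.support.gcd n = 1) (hc : c ≠ 0)
    (hp : p ∣ monomial n 1 - C c) (hp0 : p.totalDegree ≠ 0) : n.degree ≤ p.totalDegree := by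
  obtain ⟨d, hd, i, hi⟩ : ∃ d ∈ p.support, ∃ i, d i ≠ 0 := by
    simpa [totalDegree_eq_zero_iff] using hp0
  obtain ⟨k, rfl⟩ := exists_eq_nsmul_of_mem_support_of_dvd_monomial_sub_C hn hc hp hd
  have hk : 0 < k := Nat.pos_of_ne_zero (by rintro rfl; simp at hi)
  calc n.degree ≤ k * n.degree := Nat.le_mul_of_pos_left _ hk
    _ = (k • n).degree := by simp
    _ ≤ p.totalDegree := le_totalDegree hd

theorem irreducible_monomial_sub_C (hn : n.support.gcd n = 1) (hc : c ≠ 0) :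
    Irreducible (monomial n 1 - C c) := by
  have hn0 : n ≠ 0 := by rintro rfl; simp at hn
  have hdeg : 0 < n.degree := Nat.pos_of_ne_zero (by simpa [Finsupp.degree_eq_zero_iff] using hn0)
  have htotal := totalDegree_monomial_sub_C (c := c) hn0
  refine ⟨fun hunit ↦ ?_, fun p q hpq ↦ ?_⟩
  · exact hdeg.ne (htotal ▸ (isUnit_iff_totalDegree_of_isReduced.1 hunit).2.symm)
  · have hp : p ∣ monomial n 1 - C c := ⟨q, hpq⟩
    have hq : q ∣ monomial n 1 - C c := ⟨p, hpq.trans (mul_comm p q)⟩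
    have hpq0 : p * q ≠ 0 := by
      intro h
      rw [hpq, h, totalDegree_zero] at htotal
      omega
    rw [hpq, totalDegree_mul_of_isDomain (left_ne_zero_of_mul hpq0)
      (right_ne_zero_of_mul hpq0)] at htotal
    by_contra! hunits
    have hp_deg := degree_le_totalDegree_of_dvd_monomial_sub_C hn hc hp
      (hunits.1 ∘ isUnit_of_totalDegree_eq_zero_of_dvd_monomial_sub_C hn0 hp)
    have hq_deg := degree_le_totalDegree_of_dvd_monomial_sub_C hn hc hq
      (hunits.2 ∘ isUnit_of_totalDegree_eq_zero_of_dvd_monomial_sub_C hn0 hq)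
    omega

theorem irreducible_prod_X_pow_sub_C [Fintype σ] {n : σ → ℕ} (hn : Finset.univ.gcd n = 1)
    (hc : c ≠ 0) : Irreducible ((∏ i, (X i : MvPolynomial σ R) ^ n i) - C c) := by
  classical
  let e : σ →₀ ℕ := Finsupp.equivFunOnFinite.symm n
  have he : e.support.gcd e = 1 := by
    rw [← hn, Finset.gcd_eq_gcd_filter_ne_zero (s := Finset.univ)]
    congr 1
    ext i
    simp [e]
  have hmonomial : ∏ i, (X i : MvPolynomial σ R) ^ n i = monomial e 1 := by
    simp [monomial_eq, Finsupp.prod_fintype, e]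
  rw [hmonomial]
  exact irreducible_monomial_sub_C he hc

end PrimitiveBinomial

section AlgebraicallyClosed

variable {K : Type*} [Field K]

theorem dvd_of_irreducible_of_forall_eval_eq_zero [IsAlgClosed K] {σ : Type*} [Finite σ]
    {p q : MvPolynomial σ K} (hp : Irreducible p) (h : ∀ a, eval a p = 0 → eval a q = 0) :
    p ∣ q := by
  have hprime : (Ideal.span {p}).IsPrime :=
    (Ideal.span_singleton_prime hp.ne_zero).2 hp.prime
  rw [← Ideal.mem_span_singleton, ← IsPrime.vanishingIdeal_zeroLocus (K := K) (Ideal.span {p})]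
  intro a ha
  have hpa : eval a p = 0 := by
    simpa [aeval_eq_eval] using ha p (Ideal.mem_span_singleton_self p)
  simpa [aeval_eq_eval] using h a hpa

theorem exists_isRoot_dvd_sub_of_prime_of_dvd_aeval {A : Type*} [CommRing A] [Algebra K A]
    {f : Polynomial K} (hf : f.Splits) (hf0 : f ≠ 0) {π y : A} (hπ : Prime π)
    (h : π ∣ Polynomial.aeval y f) : ∃ c, f.IsRoot c ∧ π ∣ y - algebraMap K A c := by
  rw [hf.eq_prod_roots, map_mul, Polynomial.aeval_C, map_multiset_prod, Multiset.map_map] at h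
  have hlead : ¬ π ∣ algebraMap K A f.leadingCoeff := fun hdvd ↦
    hπ.not_isUnit (isUnit_of_dvd_unit hdvd
      ((IsUnit.mk0 _ (Polynomial.leadingCoeff_ne_zero.2 hf0)).map (algebraMap K A)))
  obtain ⟨c, hc, hdvd⟩ := hπ.exists_mem_multiset_map_dvd ((hπ.dvd_or_dvd h).resolve_left hlead)
  exact ⟨c, Polynomial.isRoot_of_mem_roots hc, by simpa using hdvd⟩

theorem exists_pow_eq_dvd_sub_of_prime_of_dvd_pow_sub [IsAlgClosed K] {A : Type*} [CommRing A]
    [Algebra K A] {m : ℕ} (hm : m ≠ 0) {b : K} {π y : A} (hπ : Prime π)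
    (h : π ∣ y ^ m - algebraMap K A b) : ∃ c, c ^ m = b ∧ π ∣ y - algebraMap K A c := by
  obtain ⟨c, hc, hdvd⟩ := exists_isRoot_dvd_sub_of_prime_of_dvd_aeval
    (IsAlgClosed.splits (Polynomial.X ^ m - Polynomial.C b))
    (Polynomial.X_pow_sub_C_ne_zero (Nat.pos_of_ne_zero hm) b) hπ (by simpa using h)
  exact ⟨c, by simpa [sub_eq_zero] using hc, hdvd⟩

end AlgebraicallyClosed

theorem exists_isUnit_eq_C_mul_of_associated {σ R : Type*} [CommRing R] [IsReduced R]
    {p q : MvPolynomial σ R} (h : Associated p q) : ∃ k : R, IsUnit k ∧ p = C k * q := by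
  obtain ⟨u, hu⟩ := h.symm
  obtain ⟨k, hk, hku⟩ := isUnit_iff_eq_C_of_isReduced.1 u.isUnit
  exact ⟨k, hk, by rw [← hu, hku, mul_comm]⟩

theorem irreducible_vanishing_on_monomial_hypersurface_general
    {K σ : Type*} [Field K] [IsAlgClosed K] [Fintype σ] {mexp : σ → ℕ} (hmexp : mexp ≠ 0)
    {m : ℕ} (hgcd : Finset.univ.gcd mexp = m) {b : K} (hb : b ≠ 0)
    {p : MvPolynomial σ K} (hp : Irreducible p)
    (hzero : ∀ a : σ → K, eval a p = 0 → ∏ i, a i ^ mexp i = b) :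
    ∃ k : K, k ≠ 0 ∧ ∃ c : K, c ^ m = b ∧
      p = C k * ((∏ i, (X i : MvPolynomial σ K) ^ (mexp i / m)) - C c) := by
  obtain ⟨i, hi⟩ := Function.ne_iff.1 hmexp
  have hm : m ≠ 0 := hgcd ▸ Finset.gcd_ne_zero_iff.2 ⟨i, Finset.mem_univ i, hi⟩
  have hprimitive : Finset.univ.gcd (fun i ↦ mexp i / m) = 1 :=
    hgcd ▸ Finset.gcd_div_eq_one (Finset.mem_univ i) hi
  have hmul (i : σ) : mexp i / m * m = mexp i :=
    Nat.div_mul_cancel (hgcd ▸ Finset.gcd_dvd (Finset.mem_univ i))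
  have hdvd_pow : p ∣ (∏ i, (X i : MvPolynomial σ K) ^ (mexp i / m)) ^ m - C b := by
    refine dvd_of_irreducible_of_forall_eval_eq_zero hp fun a ha ↦ ?_
    simp [← Finset.prod_pow, ← pow_mul, hmul, hzero a ha]
  obtain ⟨c, hcb, hdvd⟩ := exists_pow_eq_dvd_sub_of_prime_of_dvd_pow_sub hm hp.prime hdvd_pow
  have hc : c ≠ 0 := by rintro rfl; exact hb (by rw [← hcb, zero_pow hm])
  obtain ⟨k, hk, hpk⟩ := exists_isUnit_eq_C_mul_of_associated
    (hp.associated_of_dvd (irreducible_prod_X_pow_sub_C hprimitive hc) hdvd)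
  exact ⟨k, hk.ne_zero, c, hcb, hpk⟩

theorem irreducible_vanishing_on_monomial_hypersurface
    (K : Type*) [Field K] [IsAlgClosed K] [CharZero K]
    (α : ℕ) (hα : 1 ≤ α) (mexp : Fin α → ℕ) (hmexp : mexp ≠ 0)
    (m : ℕ) (hgcd : Finset.univ.gcd mexp = m) (b : K) (hb : b ≠ 0)
    (p : MvPolynomial (Fin α) K) (hp : Irreducible p)
    (hzero : ∀ a : Fin α → K, eval a p = 0 → ∏ i : Fin α, a i ^ mexp i = b) :
    ∃ k : K, k ≠ 0 ∧ ∃ c : K, c ^ m = b ∧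
      p = C k * ((∏ i : Fin α, (X i : MvPolynomial (Fin α) K) ^ (mexp i / m)) - C c) :=
  irreducible_vanishing_on_monomial_hypersurface_general hmexp hgcd hb hp hzero
end

section
/- Let K be an algebraically closed field of characteristic 0, let 1 ≤ r ≤ α, let C = (c_{ij}) be an r × α matrix of integers whose rows are linearly independent over ℤ, let b ∈ (Kˣ)^r, and let V₂ = { y ∈ (Kˣ)^α : ∏_{j=1}^{α} y_j^{c_{ij}} = b_i for all i = 1, …, r }. Let 0 ≤ β < α and suppose there is a nonzero polynomial q ∈ K[z_1, …, z_{β+1}] such that q(y_1, …, y_{β+1}) = 0 for every y ∈ V₂ (i.e., the first β + 1 coordinate functions are algebraically dependent on V₂). Then there exists an integer tuple λ = (λ_1, …, λ_r), not all zero, such that the vector d ∈ ℤ^α defined by d_j = ∑_{i=1}^{r} λ_i c_{ij} is nonzero and satisfies d_j = 0 for all j > β + 1. -/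
/-!
Suppose that no nonzero combination of the rows of `C` is supported on the first `β + 1` columns.
Then the rows of `C` together with the first `β + 1` standard basis vectors are linearly independent
over `ℤ`. Since `Kˣ` is divisible, it is an injective `ℤ`-module, so a homomorphism `ℤ^α → Kˣ` may
be prescribed freely on these independent vectors. Such homomorphisms are the points `y`, evaluated
by `d ↦ ∏ y_j ^ d_j`; hence every point of `(Kˣ)^(β + 1)` extends to a point of `V₂`, and `q`
vanishes on all of `(Kˣ)^(β + 1)`, which forces `q = 0`.
-/

open Function

section DivisibleGroup

variable {ι κ : Type*} [Fintype κ]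

theorem exists_sum_smul_eq_of_baer {R A : Type*} [CommRing R] [AddCommGroup A] [Module R A]
    (hA : Module.Baer R A) {v : ι → κ → R} (hv : LinearIndependent R v) (w : ι → A) :
    ∃ y : κ → A, ∀ i, ∑ j, v i j • y j = w i := by
  obtain ⟨h, hh⟩ :=
    hA.extension_property (Finsupp.linearCombination R v) hv (Finsupp.linearCombination R w)
  obtain ⟨y, rfl⟩ := (Module.piEquiv κ R A).surjective h
  refine ⟨y, fun i ↦ ?_⟩
  simpa [Module.piEquiv_apply_apply] using LinearMap.congr_fun hh (Finsupp.single i 1)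

theorem baer_int_of_nsmul_surjective {A : Type*} [AddCommGroup A]
    (hA : ∀ n : ℕ, n ≠ 0 → Surjective fun a : A ↦ n • a) : Module.Baer ℤ A :=
  letI : DivisibleBy A ℕ := divisibleByOfSMulRightSurj A ℕ fun hn ↦ hA _ hn
  letI : DivisibleBy A ℤ := AddGroup.divisibleByIntOfDivisibleByNat A
  Module.Baer.of_divisible A

theorem exists_prod_zpow_eq_of_pow_surjective {G : Type*} [CommGroup G]
    (hG : ∀ n : ℕ, n ≠ 0 → Surjective fun g : G ↦ g ^ n)
    {v : ι → κ → ℤ} (hv : LinearIndependent ℤ v) (w : ι → G) :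
    ∃ y : κ → G, ∀ i, ∏ j, y j ^ v i j = w i :=
  exists_sum_smul_eq_of_baer (baer_int_of_nsmul_surjective (A := Additive G) hG) hv w

end DivisibleGroup

theorem linearIndependent_sumElim_single {R ι κ σ : Type*} [Ring R] [Finite κ] [DecidableEq κ]
    {v : ι → κ → R} (hv : LinearIndependent R v) (e : σ ↪ κ)
    (hsupp : ∀ x ∈ Submodule.span R (Set.range v), (∀ j ∉ Set.range e, x j = 0) → x = 0) :
    LinearIndependent R (Sum.elim v fun k ↦ Pi.single (e k) 1) := by
  refine hv.sum_type ((Pi.linearIndependent_single_one κ R).comp e e.injective) ?_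
  have hspan : Submodule.span R (Set.range fun k ↦ Pi.single (e k) (1 : R)) =
      Pi.spanSubset R (Set.range e) := by
    simp only [Pi.spanSubset, ← Set.range_comp, comp_def, Pi.basisFun_apply]
  rw [hspan, Submodule.disjoint_def]
  exact fun x hxv hxe ↦ hsupp x hxv (Pi.mem_spanSubset_iff.mp hxe)

theorem mvPolynomial_eq_zero_of_eval_units_eq_zero {R σ : Type*} [CommRing R] [IsDomain R]
    [Infinite Rˣ] {q : MvPolynomial σ R}
    (hq : ∀ x : σ → Rˣ, MvPolynomial.eval (fun k ↦ (x k : R)) q = 0) : q = 0 := by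
  refine MvPolynomial.funext_set (fun _ ↦ Set.range ((↑) : Rˣ → R))
    (fun _ ↦ Set.infinite_range_of_injective Units.val_injective) fun x hx ↦ ?_
  choose u hu using fun k ↦ hx k (Set.mem_univ k)
  obtain rfl : (fun k ↦ (u k : R)) = x := funext hu
  rw [hq, map_zero]

theorem infinite_units_of_infinite (K : Type*) [DivisionRing K] [Infinite K] : Infinite Kˣ :=
  unitsEquivNeZero.infinite_iff.mpr (Set.finite_singleton (0 : K)).infinite_compl.to_subtype

theorem units_pow_surjective_of_isAlgClosed (K : Type*) [Field K] [IsAlgClosed K]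
    (n : ℕ) (hn : n ≠ 0) : Surjective fun u : Kˣ ↦ u ^ n := by
  intro u
  obtain ⟨z, hz⟩ := IsAlgClosed.exists_pow_nat_eq (u : K) (Nat.pos_of_ne_zero hn)
  have hz_unit : IsUnit z := (isUnit_pow_iff hn).mp (hz ▸ u.isUnit)
  exact ⟨hz_unit.unit, Units.ext (by simpa using hz)⟩

theorem algebraic_dependence_gives_multiplicative_relation_general
    {R ι κ σ : Type*} [CommRing R] [IsDomain R] [Infinite Rˣ] [Fintype ι] [Fintype κ]
    (hroot : ∀ n : ℕ, n ≠ 0 → Surjective fun u : Rˣ ↦ u ^ n)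
    {C : ι → κ → ℤ} (hC : LinearIndependent ℤ C) (b : ι → Rˣ) (e : σ ↪ κ)
    {q : MvPolynomial σ R} (hq : q ≠ 0)
    (hdep : ∀ y : κ → Rˣ, (∀ i, ∏ j, y j ^ C i j = b i) →
      MvPolynomial.eval (fun k ↦ (y (e k) : R)) q = 0) :
    ∃ lam : ι → ℤ, lam ≠ 0 ∧ (fun j ↦ ∑ i, lam i * C i j) ≠ 0 ∧
      ∀ j ∉ Set.range e, ∑ i, lam i * C i j = 0 := by
  classical
  suffices ∃ x ∈ Submodule.span ℤ (Set.range C), (∀ j ∉ Set.range e, x j = 0) ∧ x ≠ 0 by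
    obtain ⟨x, hxC, hxe, hx⟩ := this
    obtain ⟨lam, hlam⟩ := (Submodule.mem_span_range_iff_exists_fun ℤ).mp hxC
    obtain rfl : (fun j ↦ ∑ i, lam i * C i j) = x := by simp [← hlam, funext_iff]
    refine ⟨lam, ?_, hx, hxe⟩
    rintro rfl
    exact hx (by simp [funext_iff])
  by_contra! hsupp
  have hindep := linearIndependent_sumElim_single hC e hsupp
  refine hq (mvPolynomial_eq_zero_of_eval_units_eq_zero fun x ↦ ?_)
  obtain ⟨y, hy⟩ := exists_prod_zpow_eq_of_pow_surjective hroot hindep (Sum.elim b x)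
  have hyx (k : σ) : y (e k) = x k := by
    simpa [Pi.single_apply] using hy (Sum.inr k)
  simpa only [hyx] using hdep y fun i ↦ hy (Sum.inl i)

theorem algebraic_dependence_gives_multiplicative_relation
    (K : Type*) [Field K] [IsAlgClosed K] [CharZero K]
    (r α : ℕ) (hr : 1 ≤ r) (hrα : r ≤ α)
    (C : Fin r → Fin α → ℤ) (hC : LinearIndependent ℤ C)
    (b : Fin r → Kˣ)
    (β : ℕ) (hβ : β < α)
    (q : MvPolynomial (Fin (β + 1)) K) (hq : q ≠ 0)
    (hdep : ∀ y : Fin α → Kˣ, (∀ i : Fin r, ∏ j : Fin α, y j ^ C i j = b i) →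
      MvPolynomial.eval (fun j : Fin (β + 1) => (y (Fin.castLE hβ j) : K)) q = 0) :
    ∃ lam : Fin r → ℤ, lam ≠ 0 ∧
      (fun j : Fin α => ∑ i : Fin r, lam i * C i j) ≠ 0 ∧
      ∀ j : Fin α, β + 1 ≤ (j : ℕ) → ∑ i : Fin r, lam i * C i j = 0 := by
  have := infinite_units_of_infinite K
  simpa using algebraic_dependence_gives_multiplicative_relation_general
    (units_pow_surjective_of_isAlgClosed K) hC b (Fin.castLEEmb hβ) hq hdep
end
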